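/- arXiv:2001.09525 — 2 statements merged into one kernel-verified Lean document; each statement's English description precedes it below -/
import Mathlib

section
/- Let ABC be a triangle and let SPR be a minimum area isosceles container for ABC. Let m_S, m_P, m_R denote the midpoints of the sides PR, SR, SP, respectively. Then each of the three closed polygonal boundary pieces [m_P,S] ∪ [S,m_R], [m_R,P] ∪ [P,m_S], and [m_S,R] ∪ [R,m_P] contains precisely one of the three vertices A, B, C. -/
open EuclideanGeometry MeasureTheory Real

noncomputable section

/-- The Euclidean plane. -/
abbrev Pt : Type := EuclideanSpace ℝ (Fin 2)

/-- The closed triangular region with vertices `A`, `B`, `C`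
(the convex hull of the three vertices). -/
def tri (A B C : Pt) : Set Pt := convexHull ℝ {A, B, C}

/-- The area of the triangle `A B C`:
the 2-dimensional Lebesgue measure of its convex hull. -/
def triArea (A B C : Pt) : ℝ := (volume (tri A B C)).toReal

/-- A triangle is isosceles if at least two of its side lengths coincide. -/
def IsIsosceles (A B C : Pt) : Prop :=
  dist B C = dist C A ∨ dist C A = dist A B ∨ dist A B = dist B C

/-- `S P R` is an isosceles container for the triangle `A B C`:
it is a genuine isosceles triangle whose convex hull contains that of `A B C`. -/
def IsIsoscelesContainer (A B C S P R : Pt) : Prop :=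
  AffineIndependent ℝ ![S, P, R] ∧ IsIsosceles S P R ∧ tri A B C ⊆ tri S P R

/-- `S P R` is a minimum area isosceles container for the triangle `A B C`. -/
def IsMinIsoscelesContainer (A B C S P R : Pt) : Prop :=
  IsIsoscelesContainer A B C S P R ∧
    ∀ S' P' R' : Pt, IsIsoscelesContainer A B C S' P' R' →
      triArea S P R ≤ triArea S' P' R'

/-- `Z` lies on the ray starting at `X` passing through `Y`. -/
def OnRay (X Y Z : Pt) : Prop := SameRay ℝ (Y - X) (Z - X)

/-- Twice the signed area of the triangle `X Y Z`. -/
def signedArea₂ (X Y Z : Pt) : ℝ :=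
  (Y 0 - X 0) * (Z 1 - X 1) - (Y 1 - X 1) * (Z 0 - X 0)

lemma pt_ext {X Y : Pt} (h0 : X 0 = Y 0) (h1 : X 1 = Y 1) : X = Y := by
  ext i; fin_cases i <;> assumption

lemma affineIndependent_iff_signedArea₂_ne_zero (A B C : Pt) :
    AffineIndependent ℝ ![A, B, C] ↔ signedArea₂ A B C ≠ 0 := by
  rw [affineIndependent_iff_not_collinear_set, not_iff_not,
    collinear_iff_of_mem (p₀ := A) (by simp)]
  constructor
  · rintro ⟨v, hv⟩
    obtain ⟨b, hb⟩ := hv B (by simp)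
    obtain ⟨c, hc⟩ := hv C (by simp)
    simp only [signedArea₂, hb, hc, vadd_eq_add, PiLp.add_apply, PiLp.smul_apply, smul_eq_mul]
    ring
  · intro h
    by_cases hBA : B = A
    · refine ⟨C - A, ?_⟩
      rintro p (rfl | rfl | rfl)
      · exact ⟨0, by simp⟩
      · exact ⟨0, by simp [hBA]⟩
      · exact ⟨1, by simp⟩
    · have hn : (B 0 - A 0) ^ 2 + (B 1 - A 1) ^ 2 ≠ 0 := by
        intro h0
        apply hBA
        apply pt_ext <;> nlinarith [sq_nonneg (B 0 - A 0), sq_nonneg (B 1 - A 1)]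
      refine ⟨B - A, ?_⟩
      rintro p (rfl | rfl | rfl)
      · exact ⟨0, by simp⟩
      · exact ⟨1, by simp⟩
      · refine ⟨((B 0 - A 0) * (p 0 - A 0) + (B 1 - A 1) * (p 1 - A 1)) /
          ((B 0 - A 0) ^ 2 + (B 1 - A 1) ^ 2), ?_⟩
        unfold signedArea₂ at h
        apply pt_ext <;>
          simp only [vadd_eq_add, PiLp.add_apply, PiLp.smul_apply, smul_eq_mul,
            PiLp.sub_apply] <;> field_simp
        · linear_combination (-(B 1 - A 1)) * h
        · linear_combination (B 0 - A 0) * h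

lemma mem_tri_iff (S P R X : Pt) : X ∈ tri S P R ↔
    ∃ s p r : ℝ, 0 ≤ s ∧ 0 ≤ p ∧ 0 ≤ r ∧ s + p + r = 1 ∧ X = s • S + p • P + r • R := by
  rw [tri, convexHull_insert (by simp), convexHull_pair, mem_convexJoin]
  constructor
  · rintro ⟨_, rfl, Y, ⟨a, b, ha, hb, hab, rfl⟩, ⟨c, d, hc, hd, hcd, rfl⟩⟩
    refine ⟨c, d * a, d * b, hc, by positivity, by positivity, ?_, ?_⟩
    · rw [← hcd]; linear_combination d * hab
    · module
  · rintro ⟨s, p, r, hs, hp, hr, hsum, rfl⟩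
    refine ⟨S, rfl, ?_⟩
    by_cases h : p + r = 0
    · have hp0 : p = 0 := by linarith
      have hr0 : r = 0 := by linarith
      have hs1 : s = 1 := by linarith
      subst hp0 hr0 hs1
      exact ⟨P, left_mem_segment _ _ _, by simpa using left_mem_segment ℝ S P⟩
    · refine ⟨(p / (p + r)) • P + (r / (p + r)) • R,
        ⟨_, _, by positivity, by positivity, by field_simp, rfl⟩,
        ⟨s, p + r, hs, by positivity, by linarith, ?_⟩⟩
      rw [smul_add, smul_smul, smul_smul, mul_div_cancel₀ _ h, mul_div_cancel₀ _ h, add_assoc]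

/-- The barycentric coordinate of `X` with respect to the vertex `S` of the triangle `S P R`. -/
def bary (S P R X : Pt) : ℝ := signedArea₂ X P R / signedArea₂ S P R

lemma signedArea₂_comb {s p r : ℝ} (h : s + p + r = 1) (S P R : Pt) :
    signedArea₂ (s • S + p • P + r • R) P R = s * signedArea₂ S P R := by
  have : s = 1 - p - r := by linarith
  subst this
  simp only [signedArea₂, PiLp.add_apply, PiLp.smul_apply, smul_eq_mul]
  ring

lemma bary_comb {S P R : Pt} (hD : signedArea₂ S P R ≠ 0) {s p r : ℝ} (h : s + p + r = 1) :
    bary S P R (s • S + p • P + r • R) = s := by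
  rw [bary, signedArea₂_comb h, mul_div_cancel_right₀ _ hD]

lemma signedArea₂_rotate (X Y Z : Pt) : signedArea₂ Y Z X = signedArea₂ X Y Z := by
  unfold signedArea₂; ring

lemma signedArea₂_swap (X Y Z : Pt) : signedArea₂ Y X Z = -signedArea₂ X Y Z := by
  unfold signedArea₂; ring

lemma bary_swap (S P R X : Pt) : bary S R P X = bary S P R X := by
  have h (Y : Pt) : signedArea₂ Y R P = -signedArea₂ Y P R := by unfold signedArea₂; ring
  rw [bary, bary, h, h, neg_div_neg_eq]

lemma bary_sum {S P R : Pt} (hD : signedArea₂ S P R ≠ 0) (X : Pt) :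
    bary S P R X + bary P R S X + bary R S P X = 1 := by
  unfold bary
  rw [signedArea₂_rotate S P R, ← signedArea₂_rotate R S P, ← add_div, ← add_div,
    div_eq_one_iff_eq hD]
  unfold signedArea₂; ring

lemma bary_comb_eq {S P R : Pt} (hD : signedArea₂ S P R ≠ 0) (X : Pt) :
    X = bary S P R X • S + bary P R S X • P + bary R S P X • R := by
  unfold bary
  rw [signedArea₂_rotate S P R, ← signedArea₂_rotate R S P]
  apply pt_ext <;> simp only [PiLp.add_apply, PiLp.smul_apply, smul_eq_mul] <;> field_simp <;>
    unfold signedArea₂ <;> ring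

lemma mem_tri_iff_bary {S P R : Pt} (hD : signedArea₂ S P R ≠ 0) (X : Pt) :
    X ∈ tri S P R ↔ 0 ≤ bary S P R X ∧ 0 ≤ bary P R S X ∧ 0 ≤ bary R S P X := by
  rw [mem_tri_iff]
  constructor
  · rintro ⟨s, p, r, hs, hp, hr, h, rfl⟩
    have hD' : signedArea₂ P R S ≠ 0 := by rwa [signedArea₂_rotate]
    have hD'' : signedArea₂ R S P ≠ 0 := by rwa [signedArea₂_rotate]
    have e1 : s • S + p • P + r • R = p • P + r • R + s • S := by abel
    have e2 : s • S + p • P + r • R = r • R + s • S + p • P := by abel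
    refine ⟨by rwa [bary_comb hD h], ?_, ?_⟩
    · rwa [e1, bary_comb hD' (by linarith)]
    · rwa [e2, bary_comb hD'' (by linarith)]
  · rintro ⟨h1, h2, h3⟩
    exact ⟨_, _, _, h1, h2, h3, bary_sum hD X, bary_comb_eq hD X⟩

/-- The linear map sending the standard basis vectors to `u` and `v`. -/
def linOfVectors (u v : Pt) : Pt →ₗ[ℝ] Pt :=
  Matrix.toLpLin 2 2 !![u 0, v 0; u 1, v 1]

lemma linOfVectors_apply (u v X : Pt) : linOfVectors u v X = X 0 • u + X 1 • v := by
  apply pt_ext <;> simp [linOfVectors, Matrix.toLpLin_apply, dotProduct,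
    Fin.sum_univ_two] <;> ring

lemma det_linOfVectors (u v : Pt) : LinearMap.det (linOfVectors u v) = u 0 * v 1 - v 0 * u 1 := by
  rw [linOfVectors, LinearMap.det_toLpLin, Matrix.det_fin_two_of]

/-- The area of the right triangle spanned by the standard basis. -/
def stdArea : ℝ := triArea 0 !₂[1, 0] !₂[0, 1]

lemma triArea_eq (S P R : Pt) : triArea S P R = |signedArea₂ S P R| * stdArea := by
  have himg : tri S P R =
      (fun X => S + X) '' (linOfVectors (P - S) (R - S) '' tri 0 !₂[1, 0] !₂[0, 1]) := by
    have h1 : (fun X => S + X) = (AffineEquiv.constVAdd ℝ Pt S : Pt →ᵃ[ℝ] Pt) := by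
      ext; simp
    rw [h1, tri, tri, LinearMap.image_convexHull, AffineMap.image_convexHull]
    congr 1
    simp [Set.image_insert_eq, linOfVectors_apply]
  rw [stdArea, triArea, triArea, himg, Set.image_add_left, measure_preimage_add,
    Measure.addHaar_image_linearMap, ENNReal.toReal_mul, det_linOfVectors,
    ENNReal.toReal_ofReal (abs_nonneg _)]
  congr 2
  simp only [signedArea₂, PiLp.sub_apply]
  ring

lemma stdArea_pos : 0 < stdArea := by
  have hind : AffineIndependent ℝ ![(0 : Pt), !₂[1, 0], !₂[0, 1]] := by
    rw [affineIndependent_iff_signedArea₂_ne_zero]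
    simp [signedArea₂]
  refine ENNReal.toReal_pos (Measure.measure_pos_of_nonempty_interior _ ?_).ne' ?_
  · rw [tri, interior_convexHull_nonempty_iff_affineSpan_eq_top]
    have := hind.affineSpan_eq_top_iff_card_eq_finrank_add_one.mpr (by simp)
    rw [← this]
    congr 1
    ext
    simp
    tauto
  · exact ((isBounded_convexHull.mpr (Set.toFinite _).isBounded).measure_lt_top).ne

lemma triArea_le_triArea_iff (S P R S' P' R' : Pt) :
    triArea S P R ≤ triArea S' P' R' ↔ |signedArea₂ S P R| ≤ |signedArea₂ S' P' R'| := by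
  rw [triArea_eq, triArea_eq, mul_le_mul_iff_left₀ stdArea_pos]

lemma dist_eq_dist_iff (X Y Z W : Pt) : dist X Y = dist Z W ↔
    (X 0 - Y 0) ^ 2 + (X 1 - Y 1) ^ 2 = (Z 0 - W 0) ^ 2 + (Z 1 - W 1) ^ 2 := by
  rw [EuclideanSpace.dist_eq, EuclideanSpace.dist_eq, Real.sqrt_inj (by positivity) (by positivity)]
  simp [Fin.sum_univ_two, Real.dist_eq, sq_abs]

lemma tri_swap (X Y Z : Pt) : tri Y X Z = tri X Y Z := by
  rw [tri, tri, Set.insert_comm]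

lemma tri_swap' (X Y Z : Pt) : tri X Z Y = tri X Y Z := by
  rw [tri, tri, Set.pair_comm]

lemma IsIsosceles.swap {X Y Z : Pt} (h : IsIsosceles X Y Z) : IsIsosceles Y X Z := by
  unfold IsIsosceles at *
  rw [dist_comm X Z, dist_comm Z Y, dist_comm Y X]
  rcases h with h | h | h
  · exact .inl h.symm
  · exact .inr (.inr h.symm)
  · exact .inr (.inl h.symm)

lemma IsIsosceles.swap' {X Y Z : Pt} (h : IsIsosceles X Y Z) : IsIsosceles X Z Y := by
  unfold IsIsosceles at *
  rw [dist_comm Z Y, dist_comm Y X, dist_comm X Z]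
  rcases h with h | h | h
  · exact .inr (.inr h.symm)
  · exact .inr (.inl h.symm)
  · exact .inl h.symm

lemma signedArea₂_swap' (X Y Z : Pt) : signedArea₂ X Z Y = -signedArea₂ X Y Z := by
  unfold signedArea₂; ring

lemma isMinIsoscelesContainer_iff {A B C S P R : Pt} : IsMinIsoscelesContainer A B C S P R ↔
    (signedArea₂ S P R ≠ 0 ∧ IsIsosceles S P R ∧ A ∈ tri S P R ∧ B ∈ tri S P R ∧ C ∈ tri S P R) ∧
    ∀ S' P' R', signedArea₂ S' P' R' ≠ 0 → IsIsosceles S' P' R' → A ∈ tri S' P' R' →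
      B ∈ tri S' P' R' → C ∈ tri S' P' R' →
      |signedArea₂ S P R| ≤ |signedArea₂ S' P' R'| := by
  have key (S' P' R' : Pt) : tri A B C ⊆ tri S' P' R' ↔
      A ∈ tri S' P' R' ∧ B ∈ tri S' P' R' ∧ C ∈ tri S' P' R' := by
    rw [tri, (show Convex ℝ (tri S' P' R') from convex_convexHull ℝ _).convexHull_subset_iff]
    simp [Set.insert_subset_iff]
  simp only [IsMinIsoscelesContainer, IsIsoscelesContainer, key,
    affineIndependent_iff_signedArea₂_ne_zero, triArea_le_triArea_iff]
  simp only [and_imp]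

namespace IsMinIsoscelesContainer

variable {A B C S P R : Pt}

lemma swap_AB (h : IsMinIsoscelesContainer A B C S P R) :
    IsMinIsoscelesContainer B A C S P R := by
  unfold IsMinIsoscelesContainer IsIsoscelesContainer at *
  simpa only [tri_swap A B C] using h

lemma swap_BC (h : IsMinIsoscelesContainer A B C S P R) :
    IsMinIsoscelesContainer A C B S P R := by
  unfold IsMinIsoscelesContainer IsIsoscelesContainer at *
  simpa only [tri_swap' A B C] using h

lemma swap_SP (h : IsMinIsoscelesContainer A B C S P R) :
    IsMinIsoscelesContainer A B C P S R := by
  rw [isMinIsoscelesContainer_iff] at *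
  rw [tri_swap S P R, signedArea₂_swap S P R, abs_neg, neg_ne_zero]
  exact ⟨⟨h.1.1, h.1.2.1.swap, h.1.2.2⟩, h.2⟩

lemma swap_PR (h : IsMinIsoscelesContainer A B C S P R) :
    IsMinIsoscelesContainer A B C S R P := by
  rw [isMinIsoscelesContainer_iff] at *
  rw [tri_swap' S P R, signedArea₂_swap' S P R, abs_neg, neg_ne_zero]
  exact ⟨⟨h.1.1, h.1.2.1.swap', h.1.2.2⟩, h.2⟩

end IsMinIsoscelesContainer

lemma vertex_mem_tri (S P R : Pt) : S ∈ tri S P R := subset_convexHull ℝ _ (by simp)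

lemma vertex_mem_tri' (S P R : Pt) : P ∈ tri S P R := subset_convexHull ℝ _ (by simp)

/-- `X` lies in the interior of the nondegenerate triangle `S P R`. -/
def StrictlyInside (S P R X : Pt) : Prop :=
  0 < bary S P R X ∧ 0 < bary P R S X ∧ 0 < bary R S P X

lemma StrictlyInside.swap {S P R X : Pt} (h : StrictlyInside S P R X) :
    StrictlyInside P S R X := by
  unfold StrictlyInside at *
  rw [bary_swap P R S, bary_swap S P R, bary_swap R S P]
  tauto

lemma StrictlyInside.swap' {S P R X : Pt} (h : StrictlyInside S P R X) :
    StrictlyInside S R P X := by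
  unfold StrictlyInside at *
  rw [bary_swap P R S, bary_swap S P R, bary_swap R S P]
  tauto

open Filter Topology in
lemma eventually_mem_tri {S X : Pt} {P R : ℝ → Pt} (hP : ContinuousAt P 0) (hR : ContinuousAt R 0)
    (hD : signedArea₂ S (P 0) (R 0) ≠ 0) (hX : StrictlyInside S (P 0) (R 0) X) :
    ∀ᶠ ε in 𝓝 0, 0 < signedArea₂ S (P 0) (R 0) * signedArea₂ S (P ε) (R ε) ∧
      X ∈ tri S (P ε) (R ε) := by
  have c (i) : Continuous fun x : Pt => x i := by fun_prop
  have hP' (i) : ContinuousAt (fun ε => P ε i) 0 := (c i).continuousAt.comp hP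
  have hR' (i) : ContinuousAt (fun ε => R ε i) 0 := (c i).continuousAt.comp hR
  have cD : ContinuousAt (fun ε => signedArea₂ S (P ε) (R ε)) 0 := by
    unfold signedArea₂; fun_prop
  have hD' : signedArea₂ (P 0) (R 0) S ≠ 0 := by rwa [signedArea₂_rotate]
  have hD'' : signedArea₂ (R 0) S (P 0) ≠ 0 := by rwa [← signedArea₂_rotate]
  have c1 : ContinuousAt (fun ε => bary S (P ε) (R ε) X) 0 := by
    unfold bary signedArea₂ at *
    refine ContinuousAt.div (by fun_prop) (by fun_prop) hD
  have c2 : ContinuousAt (fun ε => bary (P ε) (R ε) S X) 0 := by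
    unfold bary signedArea₂ at *
    refine ContinuousAt.div (by fun_prop) (by fun_prop) hD'
  have c3 : ContinuousAt (fun ε => bary (R ε) S (P ε) X) 0 := by
    unfold bary signedArea₂ at *
    refine ContinuousAt.div (by fun_prop) (by fun_prop) hD''
  have e0 := (continuousAt_const.mul cD).eventually (lt_mem_nhds (mul_self_pos.mpr hD))
  filter_upwards [e0, c1.eventually (lt_mem_nhds hX.1), c2.eventually (lt_mem_nhds hX.2.1),
    c3.eventually (lt_mem_nhds hX.2.2)] with ε h0 h1 h2 h3
  exact ⟨h0, (mem_tri_iff_bary (right_ne_zero_of_mul h0.ne') X).2 ⟨h1.le, h2.le, h3.le⟩⟩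

lemma exists_zero_bary {A B C S P R : Pt}
    (h : IsMinIsoscelesContainer A B C S P R) :
    bary S P R A = 0 ∨ bary S P R B = 0 ∨ bary S P R C = 0 := by
  rw [isMinIsoscelesContainer_iff] at h
  obtain ⟨⟨hD, hiso, hA, hB, hC⟩, hmin⟩ := h
  by_contra! hne
  have key (X) (hX : X ∈ tri S P R) (hX0 : bary S P R X ≠ 0) : 0 < bary S P R X :=
    lt_of_le_of_ne ((mem_tri_iff_bary hD X).1 hX).1 hX0.symm
  obtain ⟨m, hm0, hm1, hmA, hmB, hmC⟩ : ∃ m : ℝ, 0 < m ∧ m < 1 ∧ m ≤ bary S P R A ∧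
      m ≤ bary S P R B ∧ m ≤ bary S P R C :=
    ⟨min (1 / 2) (min (bary S P R A) (min (bary S P R B) (bary S P R C))),
      by simp [key A hA hne.1, key B hB hne.2.1, key C hC hne.2.2],
      (min_le_left _ _).trans_lt (by norm_num), by simp, by simp, by simp⟩
  have hk : 0 < 1 - m := by linarith
  have hDeq : signedArea₂ S (S + (1 - m) • (P - S)) (S + (1 - m) • (R - S)) =
      (1 - m) ^ 2 * signedArea₂ S P R := by
    simp only [signedArea₂, PiLp.add_apply, PiLp.smul_apply, PiLp.sub_apply, smul_eq_mul]
    ring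
  have mem (X) (hX : X ∈ tri S P R) (hXm : m ≤ bary S P R X) :
      X ∈ tri S (S + (1 - m) • (P - S)) (S + (1 - m) • (R - S)) := by
    obtain ⟨s, p, r, hs, hp, hr, hsum, rfl⟩ := (mem_tri_iff _ _ _ _).1 hX
    rw [bary_comb hD hsum] at hXm
    refine (mem_tri_iff _ _ _ _).2 ⟨(s - m) / (1 - m), p / (1 - m), r / (1 - m),
      div_nonneg (by linarith) hk.le, by positivity, by positivity, by field_simp; linarith, ?_⟩
    have hs' : s = 1 - p - r := by linarith
    subst hs'
    apply pt_ext <;> simp only [PiLp.add_apply, PiLp.smul_apply, PiLp.sub_apply, smul_eq_mul] <;>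
      field_simp <;> ring
  have hle := hmin S (S + (1 - m) • (P - S)) (S + (1 - m) • (R - S))
    (by rw [hDeq]; positivity) ?_ (mem A hA hmA) (mem B hB hmB) (mem C hC hmC)
  · rw [hDeq, abs_mul, abs_of_pos (by positivity : 0 < (1 - m) ^ 2)] at hle
    exact (mul_lt_of_lt_one_left (abs_pos.mpr hD) (by nlinarith)).not_ge hle
  · unfold IsIsosceles at *
    simp only [dist_eq_dist_iff, PiLp.add_apply, PiLp.smul_apply, PiLp.sub_apply,
      smul_eq_mul] at *
    rcases hiso with h | h | h
    · left; linear_combination (1 - m) ^ 2 * h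
    · right; left; linear_combination (1 - m) ^ 2 * h
    · right; right; linear_combination (1 - m) ^ 2 * h

/-- Rotation of a vector by a right angle. -/
def quarterTurn (v : Pt) : Pt := !₂[-v 1, v 0]

open Filter Topology in
lemma not_strictlyInside_of_leg {C S P R : Pt} (h : IsMinIsoscelesContainer S P C S P R)
    (hleg : dist R S = dist S P) (hC : StrictlyInside S P R C) : False := by
  rw [isMinIsoscelesContainer_iff] at h
  obtain ⟨⟨hD, -, -, -, -⟩, hmin⟩ := h
  set q := (P 0 - S 0) * (R 0 - S 0) + (P 1 - S 1) * (R 1 - S 1) with hq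
  obtain ⟨σ, hσ, hσq⟩ : ∃ σ : ℝ, σ ^ 2 = 1 ∧ σ * q * signedArea₂ S P R ≤ 0 := by
    rcases le_total (q * signedArea₂ S P R) 0 with h0 | h0
    · exact ⟨1, by norm_num, by linarith⟩
    · exact ⟨-1, by norm_num, by linarith⟩
  set R' : ℝ → Pt := fun ε => S + ((1 - ε ^ 2) / (1 + ε ^ 2)) • (R - S) +
    (2 * ε * σ / (1 + ε ^ 2)) • quarterTurn (R - S) with hR'
  have hR0 : R' 0 = R := by simp [hR']
  have hcont : ContinuousAt R' 0 := by
    rw [hR']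
    fun_prop (disch := simp)
  have hev := eventually_mem_tri (S := S) (X := C) (P := fun _ => P) continuousAt_const hcont
    (by rwa [hR0]) (by rwa [hR0])
  obtain ⟨ε, ⟨hpos, hmem⟩, hε⟩ := ((hev.filter_mono nhdsWithin_le_nhds).and
    (self_mem_nhdsWithin : Set.Ioi (0 : ℝ) ∈ 𝓝[>] 0)).exists
  have hε : 0 < ε := hε
  rw [hR0] at hpos
  have hle := hmin S P (R' ε) (right_ne_zero_of_mul hpos.ne') ?_ (vertex_mem_tri _ _ _)
    (vertex_mem_tri' _ _ _) hmem
  · have hD' : signedArea₂ S P (R' ε) * (1 + ε ^ 2) =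
        (1 - ε ^ 2) * signedArea₂ S P R + 2 * ε * σ * q := by
      simp only [hR', quarterTurn, signedArea₂, PiLp.add_apply, PiLp.smul_apply, PiLp.sub_apply,
        smul_eq_mul, hq]
      simp
      field_simp
      ring
    have h1 : |signedArea₂ S P R| * |signedArea₂ S P R| ≤
        |signedArea₂ S P R| * |signedArea₂ S P (R' ε)| :=
      mul_le_mul_of_nonneg_left hle (abs_nonneg _)
    rw [← abs_mul, ← abs_mul, abs_of_pos hpos, abs_mul_self] at h1
    have h2 : 0 < signedArea₂ S P R * signedArea₂ S P R := mul_self_pos.mpr hD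
    have h3 : signedArea₂ S P R * signedArea₂ S P (R' ε) * (1 + ε ^ 2) =
        (1 - ε ^ 2) * (signedArea₂ S P R * signedArea₂ S P R) +
          2 * ε * (σ * q * signedArea₂ S P R) := by
      linear_combination signedArea₂ S P R * hD'
    have h4 : 2 * ε * (σ * q * signedArea₂ S P R) ≤ 0 :=
      mul_nonpos_of_nonneg_of_nonpos (by positivity) hσq
    nlinarith [mul_pos (pow_pos hε 2) h2]
  · right; left
    rw [← hleg, dist_eq_dist_iff]
    simp only [hR', quarterTurn, PiLp.add_apply, PiLp.smul_apply, PiLp.sub_apply, smul_eq_mul]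
    simp
    field_simp
    linear_combination 4 * ε ^ 2 * ((R 0 - S 0) ^ 2 + (R 1 - S 1) ^ 2) * hσ

open Filter Topology in
lemma not_strictlyInside_of_base {C S P R : Pt} (h : IsMinIsoscelesContainer S P C S P R)
    (hbase : dist P R = dist R S) (hC : StrictlyInside S P R C) : False := by
  rw [isMinIsoscelesContainer_iff] at h
  obtain ⟨⟨hD, -, -, -, -⟩, hmin⟩ := h
  set R' : ℝ → Pt := fun ε => R + ε • (midpoint ℝ S P - R) with hR'
  have hR0 : R' 0 = R := by simp [hR']
  have hcont : ContinuousAt R' 0 := by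
    rw [hR']
    fun_prop
  have hev := eventually_mem_tri (S := S) (X := C) (P := fun _ => P) continuousAt_const hcont
    (by rwa [hR0]) (by rwa [hR0])
  obtain ⟨ε, ⟨⟨hpos, hmem⟩, hε1⟩, hε⟩ := (((hev.and (gt_mem_nhds (zero_lt_one' ℝ))).filter_mono
    nhdsWithin_le_nhds).and (self_mem_nhdsWithin : Set.Ioi (0 : ℝ) ∈ 𝓝[>] 0)).exists
  have hε : 0 < ε := hε
  rw [hR0] at hpos
  have hm (i) : midpoint ℝ S P i = (S i + P i) / 2 := by
    simp [midpoint_eq_smul_add]; ring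
  have hle := hmin S P (R' ε) (right_ne_zero_of_mul hpos.ne') ?_ (vertex_mem_tri _ _ _)
    (vertex_mem_tri' _ _ _) hmem
  · have hD' : signedArea₂ S P (R' ε) = (1 - ε) * signedArea₂ S P R := by
      simp only [hR', signedArea₂, PiLp.add_apply, PiLp.smul_apply, PiLp.sub_apply,
        smul_eq_mul, hm]
      ring
    rw [hD', abs_mul, abs_of_pos (by linarith : 0 < 1 - ε)] at hle
    nlinarith [abs_pos.mpr hD]
  · left
    rw [dist_eq_dist_iff] at *
    simp only [hR', PiLp.add_apply, PiLp.smul_apply, PiLp.sub_apply, smul_eq_mul, hm]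
    linear_combination (1 - ε) * hbase

lemma not_strictlyInside_of_edge {C S P R : Pt} (h : IsMinIsoscelesContainer S P C S P R)
    (hC : StrictlyInside S P R C) : False := by
  rcases h.1.2.1 with h1 | h1 | h1
  · exact not_strictlyInside_of_base h h1 hC
  · exact not_strictlyInside_of_leg h h1 hC
  · refine not_strictlyInside_of_leg h.swap_SP.swap_AB ?_ hC.swap
    rw [dist_comm R P, dist_comm P S, h1]

open Filter Topology in
lemma not_strictlyInside_of_cevian {C S P R : Pt} {t : ℝ} (ht0 : 0 < t) (ht1 : t < 1)
    (h : IsMinIsoscelesContainer S (P + t • (R - P)) C S P R)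
    (hC : StrictlyInside S P R C) : False := by
  rw [isMinIsoscelesContainer_iff] at h
  obtain ⟨⟨hD, hiso, -, -, -⟩, hmin⟩ := h
  set b := P + t • (R - P) - S with hb
  obtain ⟨σ, hσ, hσq⟩ : ∃ σ : ℝ, σ ^ 2 = 1 ∧
      0 ≤ σ * (b 0 * (R 0 - P 0) + b 1 * (R 1 - P 1)) := by
    rcases le_total 0 (b 0 * (R 0 - P 0) + b 1 * (R 1 - P 1)) with h0 | h0
    · exact ⟨1, by norm_num, by linarith⟩
    · exact ⟨-1, by norm_num, by linarith⟩
  have hd : 0 < (R 0 - P 0) ^ 2 + (R 1 - P 1) ^ 2 := by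
    by_contra! h0
    have h0' : R 0 - P 0 = 0 := by nlinarith [sq_nonneg (R 0 - P 0), sq_nonneg (R 1 - P 1)]
    have h1' : R 1 - P 1 = 0 := by nlinarith [sq_nonneg (R 0 - P 0), sq_nonneg (R 1 - P 1)]
    apply hD
    unfold signedArea₂
    linear_combination (P 0 - S 0) * h1' - (P 1 - S 1) * h0'
  have hbpos : 0 < (b 0) ^ 2 + (b 1) ^ 2 := by
    by_contra! h0
    have h0' : b 0 = 0 := by nlinarith [sq_nonneg (b 0), sq_nonneg (b 1)]
    have h1' : b 1 = 0 := by nlinarith [sq_nonneg (b 0), sq_nonneg (b 1)]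
    apply hD
    simp only [hb, PiLp.add_apply, PiLp.smul_apply, PiLp.sub_apply, smul_eq_mul] at h0' h1'
    unfold signedArea₂
    linear_combination (R 1 - P 1) * h0' - (R 0 - P 0) * h1'
  set b' : ℝ → Pt := fun ε => b + (ε * σ) • (R - P) with hb'
  set N : ℝ → ℝ := fun ε => (b' ε 0) ^ 2 + (b' ε 1) ^ 2 with hN
  set u : ℝ → ℝ := fun ε => (b 0 * b' ε 0 + b 1 * b' ε 1) / N ε with hu
  set v : ℝ → ℝ := fun ε => (b 1 * b' ε 0 - b 0 * b' ε 1) / N ε with hv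
  set f : Pt → ℝ → Pt := fun X ε => S + u ε • (X - S) + v ε • quarterTurn (X - S) with hf
  have hb0 : b' 0 = b := by simp [hb']
  have hN0 : N 0 = (b 0) ^ 2 + (b 1) ^ 2 := by simp [hN, hb0]
  have hu0 : u 0 = 1 := by
    simp only [hu, hN0, hb0]
    field_simp
  have hv0 : v 0 = 0 := by
    simp only [hv, hN0, hb0]
    field_simp
    ring
  have hf0 (X) : f X 0 = X := by simp [hf, hu0, hv0]
  have cb' (i) : ContinuousAt (fun ε => b' ε i) 0 := by
    simp only [hb', PiLp.add_apply, PiLp.smul_apply]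
    fun_prop
  have cN : ContinuousAt N 0 := by simp only [hN]; fun_prop
  have cu : ContinuousAt u 0 :=
    ContinuousAt.div (by fun_prop) cN (by rw [hN0]; exact hbpos.ne')
  have cv : ContinuousAt v 0 :=
    ContinuousAt.div (by fun_prop) cN (by rw [hN0]; exact hbpos.ne')
  have cf (X) : ContinuousAt (f X) 0 := by simp only [hf]; fun_prop
  have hev := eventually_mem_tri (S := S) (X := C) (cf P) (cf R)
    (by rwa [hf0, hf0]) (by rwa [hf0, hf0])
  have c1 : ContinuousAt (fun ε => t + ε * σ) 0 := by fun_prop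
  have e1 := c1.eventually (lt_mem_nhds (by simpa using ht0 : 0 < t + 0 * σ))
  have e2 := c1.eventually (gt_mem_nhds (by simpa using ht1 : t + 0 * σ < 1))
  obtain ⟨ε, ⟨⟨hpos, hmem⟩, hε1, hε2⟩, hε⟩ := (((hev.and (e1.and e2)).filter_mono
    nhdsWithin_le_nhds).and (self_mem_nhdsWithin : Set.Ioi (0 : ℝ) ∈ 𝓝[>] 0)).exists
  have hε : 0 < ε := hε
  have hNlt : (b 0) ^ 2 + (b 1) ^ 2 < N ε := by
    have : N ε = (b 0) ^ 2 + (b 1) ^ 2 +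
        2 * ε * (σ * (b 0 * (R 0 - P 0) + b 1 * (R 1 - P 1))) +
        ε ^ 2 * ((R 0 - P 0) ^ 2 + (R 1 - P 1) ^ 2) := by
      simp only [hN, hb', PiLp.add_apply, PiLp.smul_apply, PiLp.sub_apply, smul_eq_mul]
      linear_combination ε ^ 2 * ((R 0 - P 0) ^ 2 + (R 1 - P 1) ^ 2) * hσ
    rw [this]
    have := mul_nonneg (by positivity : 0 ≤ 2 * ε) hσq
    have := mul_pos (pow_pos hε 2) hd
    linarith
  have hNpos : 0 < N ε := hbpos.trans hNlt
  have huv : u ε ^ 2 + v ε ^ 2 = ((b 0) ^ 2 + (b 1) ^ 2) / N ε := by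
    simp only [hu, hv]
    rw [div_pow, div_pow, ← add_div, div_eq_div_iff (by positivity) (by positivity)]
    simp only [hN]
    ring
  have huv1 : u ε ^ 2 + v ε ^ 2 < 1 := by rwa [huv, div_lt_one hNpos]
  have hDeq : signedArea₂ S (f P ε) (f R ε) = (u ε ^ 2 + v ε ^ 2) * signedArea₂ S P R := by
    simp only [hf, quarterTurn, signedArea₂, PiLp.add_apply, PiLp.smul_apply, PiLp.sub_apply,
      smul_eq_mul]
    simp
    ring
  have hB : P + t • (R - P) ∈ tri S (f P ε) (f R ε) := by
    refine (mem_tri_iff _ _ _ _).2 ⟨0, 1 - (t + ε * σ), t + ε * σ, le_rfl, by linarith, hε1.le,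
      by ring, ?_⟩
    have e0 : b 0 = u ε * b' ε 0 - v ε * b' ε 1 := by
      simp only [hu, hv]
      field_simp
      simp only [hN]
      ring
    have e1 : b 1 = u ε * b' ε 1 + v ε * b' ε 0 := by
      simp only [hu, hv]
      field_simp
      simp only [hN]
      ring
    have g (i) : b' ε i = (1 - (t + ε * σ)) * (P i - S i) + (t + ε * σ) * (R i - S i) := by
      simp only [hb', hb, PiLp.add_apply, PiLp.smul_apply, PiLp.sub_apply, smul_eq_mul]
      ring
    rw [g, g] at e0 e1
    have hbi (i) : b i = P i + t * (R i - P i) - S i := by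
      simp only [hb, PiLp.add_apply, PiLp.smul_apply, PiLp.sub_apply, smul_eq_mul]
    rw [hbi] at e0 e1
    apply pt_ext
    · simp [hf, quarterTurn]
      linear_combination e0
    · simp [hf, quarterTurn]
      linear_combination e1
  have hle := hmin S (f P ε) (f R ε) (right_ne_zero_of_mul hpos.ne') ?_ (vertex_mem_tri _ _ _)
    hB hmem
  · rw [hDeq, abs_mul, abs_of_nonneg (by positivity : 0 ≤ u ε ^ 2 + v ε ^ 2)] at hle
    nlinarith [abs_pos.mpr hD]
  · unfold IsIsosceles at *
    simp only [dist_eq_dist_iff, hf, quarterTurn, PiLp.add_apply, PiLp.smul_apply,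
      PiLp.sub_apply, smul_eq_mul] at *
    simp
    rcases hiso with h | h | h
    · left; linear_combination (u ε ^ 2 + v ε ^ 2) * h
    · right; left; linear_combination (u ε ^ 2 + v ε ^ 2) * h
    · right; right; linear_combination (u ε ^ 2 + v ε ^ 2) * h

lemma not_strictlyInside_of_vertex {B C S P R : Pt} (h : IsMinIsoscelesContainer S B C S P R)
    (hB : bary S P R B = 0) (hC : StrictlyInside S P R C) : False := by
  have h' := isMinIsoscelesContainer_iff.1 h
  obtain ⟨⟨hD, -, -, hBm, -⟩, -⟩ := h'
  obtain ⟨s, p, r, -, hp, hr, hsum, rfl⟩ := (mem_tri_iff _ _ _ _).1 hBm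
  rw [bary_comb hD hsum] at hB
  subst hB
  obtain rfl : p = 1 - r := by linarith
  rcases hr.eq_or_lt with rfl | hr
  · simp only [sub_zero, zero_smul, one_smul, zero_add, add_zero] at h
    exact not_strictlyInside_of_edge h hC
  rcases hp.eq_or_lt with h0 | hp
  · obtain rfl : r = 1 := by linarith
    simp only [sub_self, zero_smul, one_smul, zero_add] at h
    exact not_strictlyInside_of_edge h.swap_PR hC.swap'
  · refine not_strictlyInside_of_cevian hr (by linarith : r < 1) ?_ hC
    convert h using 1
    module

lemma eq_vertex_of_bary {S P R X : Pt} (hD : signedArea₂ S P R ≠ 0) (hp : bary P R S X = 0)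
    (hr : bary R S P X = 0) : X = S := by
  have h1 := bary_sum hD X
  have h2 := bary_comb_eq hD X
  rw [hp, hr, add_zero, add_zero] at h1
  simpa [hp, hr, h1] using h2

lemma not_strictlyInside_of_isMin {A B C S P R : Pt}
    (h : IsMinIsoscelesContainer A B C S P R) : ¬ StrictlyInside S P R C := by
  intro hC
  have hD := (isMinIsoscelesContainer_iff.1 h).1.1
  have key {A' B' S' P' R' : Pt} (h' : IsMinIsoscelesContainer A' B' C S' P' R')
      (hp : bary P' R' S' A' = 0) (hr : bary R' S' P' A' = 0) (hs : bary S' P' R' B' = 0)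
      (hC' : StrictlyInside S' P' R' C) : False := by
    have hD' := (isMinIsoscelesContainer_iff.1 h').1.1
    obtain rfl := eq_vertex_of_bary hD' hp hr
    exact not_strictlyInside_of_vertex h' hs hC'
  have zs := exists_zero_bary h
  have zp := exists_zero_bary h.swap_SP.swap_PR
  have zr := exists_zero_bary h.swap_PR.swap_SP
  have none (X : Pt) (h1 : bary S P R X = 0) (h2 : bary P R S X = 0) (h3 : bary R S P X = 0) :
      False := by
    have := bary_sum hD X
    simp [h1, h2, h3] at this
  have hswap : IsMinIsoscelesContainer A B C P R S := h.swap_SP.swap_PR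
  have hswap' : IsMinIsoscelesContainer A B C R S P := hswap.swap_SP.swap_PR
  have hCp : StrictlyInside P R S C := hC.swap.swap'
  have hCr : StrictlyInside R S P C := hCp.swap.swap'
  rcases zs with zs | zs | zs
  · rcases zp with zp | zp | zp
    · rcases zr with zr | zr | zr
      · exact none A zs zp zr
      · exact key hswap' zs zp zr hCr
      · exact hC.2.2.ne' zr
    · rcases zr with zr | zr | zr
      · exact key hswap zr zs zp hCp
      · exact key h.swap_AB zp zr zs hC
      · exact hC.2.2.ne' zr
    · exact hC.2.1.ne' zp
  · rcases zp with zp | zp | zp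
    · rcases zr with zr | zr | zr
      · exact key h zp zr zs hC
      · exact key hswap.swap_AB zr zs zp hCp
      · exact hC.2.2.ne' zr
    · rcases zr with zr | zr | zr
      · exact key hswap'.swap_AB zs zp zr hCr
      · exact none B zs zp zr
      · exact hC.2.2.ne' zr
    · exact hC.2.1.ne' zp
  · exact hC.1.ne' zs

lemma abs_signedArea₂_lt_of_dist {X Y Z S P R : Pt} (hD : signedArea₂ X Y Z ≠ 0)
    (h : IsMinIsoscelesContainer X Y Z S P R)
    (h1 : dist X Z ≤ dist X Y) (h2 : dist X Y < 2 * dist X Z) :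
    |signedArea₂ S P R| < 2 * |signedArea₂ X Y Z| := by
  have hpos : 0 < dist X Z := by linarith
  set k := dist X Y / dist X Z with hk
  have hk1 : 1 ≤ k := (one_le_div hpos).2 h1
  have hk2 : k < 2 := (div_lt_iff₀ hpos).2 h2
  have hDeq : signedArea₂ X Y (X + k • (Z - X)) = k * signedArea₂ X Y Z := by
    simp only [signedArea₂, PiLp.add_apply, PiLp.smul_apply, PiLp.sub_apply, smul_eq_mul]
    ring
  have hle := (isMinIsoscelesContainer_iff.1 h).2 X Y (X + k • (Z - X))
    (by rw [hDeq]; exact mul_ne_zero (by positivity) hD) ?_ (vertex_mem_tri _ _ _)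
    (vertex_mem_tri' _ _ _) ?_
  · rw [hDeq, abs_mul, abs_of_pos (by positivity : 0 < k)] at hle
    exact hle.trans_lt (mul_lt_mul_of_pos_right hk2 (abs_pos.mpr hD))
  · right; left
    rw [dist_eq_norm, add_sub_cancel_left, norm_smul, Real.norm_of_nonneg (by positivity),
      ← dist_eq_norm, dist_comm Z X, hk, div_mul_cancel₀ _ hpos.ne']
  · refine (mem_tri_iff _ _ _ _).2 ⟨1 - 1 / k, 0, 1 / k, ?_, le_rfl, by positivity, by ring, ?_⟩
    · rw [sub_nonneg, div_le_one (by positivity)]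
      exact hk1
    · rw [smul_add, smul_smul, one_div_mul_cancel (by positivity)]
      module

lemma dist_lt_dist_add_dist_of_signedArea₂ {X Y Z : Pt} (hD : signedArea₂ X Y Z ≠ 0) :
    dist X Z < dist X Y + dist Y Z := by
  refine (dist_triangle X Y Z).lt_of_ne fun h => hD ?_
  have hc := (dist_add_dist_eq_iff.1 h.symm).collinear
  rw [← not_not (a := Collinear _ _), ← affineIndependent_iff_not_collinear_set,
    affineIndependent_iff_signedArea₂_ne_zero, not_not] at hc
  exact hc

lemma abs_signedArea₂_lt {A B C S P R : Pt} (hD : signedArea₂ A B C ≠ 0)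
    (h : IsMinIsoscelesContainer A B C S P R) :
    |signedArea₂ S P R| < 2 * |signedArea₂ A B C| := by
  have e1 : |signedArea₂ A C B| = |signedArea₂ A B C| := by rw [signedArea₂_swap', abs_neg]
  have e2 : |signedArea₂ B A C| = |signedArea₂ A B C| := by rw [signedArea₂_swap, abs_neg]
  have e3 : |signedArea₂ B C A| = |signedArea₂ A B C| := by rw [signedArea₂_rotate]
  have e4 : |signedArea₂ C A B| = |signedArea₂ A B C| := by rw [← signedArea₂_rotate]
  have e5 : |signedArea₂ C B A| = |signedArea₂ A B C| := by
    rw [signedArea₂_swap, signedArea₂_rotate, abs_neg]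
  have hne {x : ℝ} (e : |x| = |signedArea₂ A B C|) : x ≠ 0 := by
    rw [← abs_pos, e, abs_pos]; exact hD
  have t1 := dist_lt_dist_add_dist_of_signedArea₂ hD
  have t2 := dist_lt_dist_add_dist_of_signedArea₂ (hne e1)
  have t3 := dist_lt_dist_add_dist_of_signedArea₂ (hne e2)
  rw [dist_comm C B] at t2
  rw [dist_comm B A] at t3
  have s1 := abs_signedArea₂_lt_of_dist hD h
  have s2 := e1 ▸ abs_signedArea₂_lt_of_dist (hne e1) h.swap_BC
  have s3 := e2 ▸ abs_signedArea₂_lt_of_dist (hne e2) h.swap_AB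
  have s4 := e3 ▸ abs_signedArea₂_lt_of_dist (hne e3) h.swap_AB.swap_BC
  have s5 := e4 ▸ abs_signedArea₂_lt_of_dist (hne e4) h.swap_BC.swap_AB
  have s6 := e5 ▸ abs_signedArea₂_lt_of_dist (hne e5) h.swap_AB.swap_BC.swap_AB
  simp only [dist_comm B A, dist_comm C A, dist_comm C B] at s1 s2 s3 s4 s5 s6
  rcases le_total (dist A B) (dist A C) with h1 | h1 <;>
  rcases le_total (dist A C) (dist B C) with h2 | h2 <;>
  rcases le_total (dist A B) (dist B C) with h3 | h3
  · exact s6 h2 (by linarith)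
  · exact s6 h2 (by linarith)
  · exact s5 h2 (by linarith)
  · exact s2 h1 (by linarith)
  · exact s4 h3 (by linarith)
  · exact s3 h3 (by linarith)
  · exact s1 h1 (by linarith)
  · exact s1 h1 (by linarith)

lemma signedArea₂_eq_bary {S P R : Pt} (hD : signedArea₂ S P R ≠ 0) (A B C : Pt) :
    signedArea₂ A B C = (bary S P R A * (bary P R S B - bary P R S C) +
      bary S P R B * (bary P R S C - bary P R S A) +
      bary S P R C * (bary P R S A - bary P R S B)) * signedArea₂ S P R := by
  unfold bary
  rw [signedArea₂_rotate S P R]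
  field_simp
  unfold signedArea₂
  ring

lemma abs_det_le_half_of_le_half {a₁ a₂ a₃ b₁ b₂ b₃ : ℝ} (ha₁ : 0 ≤ a₁) (ha₂ : 0 ≤ a₂)
    (ha₃ : 0 ≤ a₃) (ha₁' : a₁ ≤ 1 / 2) (ha₂' : a₂ ≤ 1 / 2) (ha₃' : a₃ ≤ 1 / 2)
    (hb₁ : 0 ≤ b₁) (hb₂ : 0 ≤ b₂) (hb₃ : 0 ≤ b₃) (hb₁' : b₁ ≤ 1) (hb₂' : b₂ ≤ 1)
    (hb₃' : b₃ ≤ 1) :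
    |a₁ * (b₂ - b₃) + a₂ * (b₃ - b₁) + a₃ * (b₁ - b₂)| ≤ 1 / 2 := by
  have key (x d : ℝ) (hx : 0 ≤ x) (hx' : x ≤ 1 / 2) :
      min 0 (d / 2) ≤ x * d ∧ x * d ≤ max 0 (d / 2) := by
    rcases le_total 0 d with h | h
    · rw [min_eq_left (by linarith), max_eq_right (by linarith)]
      constructor <;> nlinarith
    · rw [min_eq_right (by linarith), max_eq_left (by linarith)]
      constructor <;> nlinarith
  have k1 := key a₁ (b₂ - b₃) ha₁ ha₁'
  have k2 := key a₂ (b₃ - b₁) ha₂ ha₂'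
  have k3 := key a₃ (b₁ - b₂) ha₃ ha₃'
  rw [abs_le]
  constructor <;> grind

lemma abs_det_le_half_of_corner {a₁ a₂ a₃ b₁ b₂ b₃ : ℝ} (ha₁ : 1 / 2 ≤ a₁) (ha₂ : 1 / 2 ≤ a₂)
    (ha₃ : 0 ≤ a₃) (hb₁ : 0 ≤ b₁) (hb₂ : 0 ≤ b₂) (hb₃ : 0 ≤ b₃)
    (hc₁ : a₁ + b₁ ≤ 1) (hc₂ : a₂ + b₂ ≤ 1) (hc₃ : a₃ + b₃ ≤ 1)
    (hb : 1 / 2 ≤ b₁ ∨ 1 / 2 ≤ b₂ ∨ 1 / 2 ≤ b₃)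
    (hc : a₁ + b₁ ≤ 1 / 2 ∨ a₂ + b₂ ≤ 1 / 2 ∨ a₃ + b₃ ≤ 1 / 2) :
    |a₁ * (b₂ - b₃) + a₂ * (b₃ - b₁) + a₃ * (b₁ - b₂)| ≤ 1 / 2 := by
  rw [abs_le]
  rcases hb with hb | hb | hb
  · obtain rfl : a₁ = 1 / 2 := by linarith
    obtain rfl : b₁ = 1 / 2 := by linarith
    rcases hc with hc | hc | hc
    · linarith
    · obtain rfl : a₂ = 1 / 2 := by linarith
      obtain rfl : b₂ = 0 := by linarith
      constructor <;> linarith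
    · constructor <;> nlinarith
  · obtain rfl : a₂ = 1 / 2 := by linarith
    obtain rfl : b₂ = 1 / 2 := by linarith
    rcases hc with hc | hc | hc
    · obtain rfl : a₁ = 1 / 2 := by linarith
      obtain rfl : b₁ = 0 := by linarith
      constructor <;> linarith
    · linarith
    · constructor <;> nlinarith
  · rcases hc with hc | hc | hc
    · obtain rfl : a₁ = 1 / 2 := by linarith
      obtain rfl : b₁ = 0 := by linarith
      constructor <;> nlinarith
    · obtain rfl : a₂ = 1 / 2 := by linarith
      obtain rfl : b₂ = 0 := by linarith
      constructor <;> nlinarith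
    · obtain rfl : a₃ = 0 := by linarith
      obtain rfl : b₃ = 1 / 2 := by linarith
      constructor <;> nlinarith

lemma mem_corner_iff {S P R X : Pt} (hD : signedArea₂ S P R ≠ 0) (hX : X ∈ tri S P R) :
    X ∈ segment ℝ (midpoint ℝ S R) S ∪ segment ℝ S (midpoint ℝ S P) ↔
      1 / 2 ≤ bary S P R X ∧ (bary P R S X = 0 ∨ bary R S P X = 0) := by
  have hD' : signedArea₂ P R S ≠ 0 := by rwa [signedArea₂_rotate]
  have hD'' : signedArea₂ R S P ≠ 0 := by rwa [signedArea₂_rotate]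
  have hm (Y : Pt) : midpoint ℝ S Y = (1 / 2 : ℝ) • S + (1 / 2 : ℝ) • Y := by
    rw [midpoint_eq_smul_add, invOf_eq_inv]; module
  have hX' := (mem_tri_iff_bary hD X).1 hX
  have hsum := bary_sum hD X
  have hcomb := bary_comb_eq hD X
  simp only [hm]
  constructor
  · rintro (⟨a, b, ha, hb, hab, h⟩ | ⟨a, b, ha, hb, hab, h⟩)
    · have e1 : X = (a / 2 + b) • S + (0 : ℝ) • P + (a / 2) • R := by rw [← h]; module
      have e2 : X = (0 : ℝ) • P + (a / 2) • R + (a / 2 + b) • S := by rw [← h]; module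
      have g1 := bary_comb hD (show (a / 2 + b) + 0 + (a / 2) = 1 by linarith)
      have g2 := bary_comb hD' (show 0 + (a / 2) + (a / 2 + b) = 1 by linarith)
      rw [← e1] at g1
      rw [← e2] at g2
      exact ⟨by linarith, .inl g2⟩
    · have e1 : X = (a + b / 2) • S + (b / 2) • P + (0 : ℝ) • R := by rw [← h]; module
      have e2 : X = (0 : ℝ) • R + (a + b / 2) • S + (b / 2) • P := by rw [← h]; module
      have g1 := bary_comb hD (show (a + b / 2) + (b / 2) + 0 = 1 by linarith)
      have g2 := bary_comb hD'' (show 0 + (a + b / 2) + (b / 2) = 1 by linarith)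
      rw [← e1] at g1
      rw [← e2] at g2
      exact ⟨by linarith, .inr g2⟩
  · rintro ⟨h1, h2 | h2⟩
    · left
      refine ⟨2 * bary R S P X, 1 - 2 * bary R S P X, by linarith, by linarith, by ring, ?_⟩
      rw [h2, (by linarith : bary S P R X = 1 - bary R S P X)] at hcomb
      conv_rhs => rw [hcomb]
      module
    · right
      refine ⟨1 - 2 * bary P R S X, 2 * bary P R S X, by linarith, by linarith, by ring, ?_⟩
      rw [h2, (by linarith : bary S P R X = 1 - bary P R S X)] at hcomb
      conv_rhs => rw [hcomb]
      module

lemma half_lt_abs_det {A B C S P R : Pt} (hABC : signedArea₂ A B C ≠ 0)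
    (h : IsMinIsoscelesContainer A B C S P R) :
    1 / 2 < |bary S P R A * (bary P R S B - bary P R S C) +
      bary S P R B * (bary P R S C - bary P R S A) +
      bary S P R C * (bary P R S A - bary P R S B)| := by
  have hD := (isMinIsoscelesContainer_iff.1 h).1.1
  have hlt := abs_signedArea₂_lt hABC h
  rw [signedArea₂_eq_bary hD A B C, abs_mul] at hlt
  have := abs_pos.mpr hD
  by_contra! hle
  nlinarith

lemma exists_half_le_bary {A B C S P R : Pt} (hABC : signedArea₂ A B C ≠ 0)
    (h : IsMinIsoscelesContainer A B C S P R) :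
    1 / 2 ≤ bary S P R A ∨ 1 / 2 ≤ bary S P R B ∨ 1 / 2 ≤ bary S P R C := by
  obtain ⟨⟨hD, -, hA, hB, hC⟩, -⟩ := isMinIsoscelesContainer_iff.1 h
  have hlt := half_lt_abs_det hABC h
  have sA := bary_sum hD A
  have sB := bary_sum hD B
  have sC := bary_sum hD C
  rw [mem_tri_iff_bary hD] at hA hB hC
  by_contra! hne
  exact hlt.not_ge (abs_det_le_half_of_le_half hA.1 hB.1 hC.1 hne.1.le hne.2.1.le hne.2.2.le
    hA.2.1 hB.2.1 hC.2.1 (by linarith) (by linarith) (by linarith))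

lemma not_half_le_bary_of_half_le_bary {A B C S P R : Pt} (hABC : signedArea₂ A B C ≠ 0)
    (h : IsMinIsoscelesContainer A B C S P R) (h1 : 1 / 2 ≤ bary S P R A) :
    ¬ 1 / 2 ≤ bary S P R B := by
  intro h2
  obtain ⟨⟨hD, -, hA, hB, hC⟩, -⟩ := isMinIsoscelesContainer_iff.1 h
  have hlt := half_lt_abs_det hABC h
  have hp := exists_half_le_bary hABC h.swap_SP.swap_PR
  have hr := exists_half_le_bary hABC h.swap_PR.swap_SP
  have sA := bary_sum hD A
  have sB := bary_sum hD B
  have sC := bary_sum hD C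
  rw [mem_tri_iff_bary hD] at hA hB hC
  refine hlt.not_ge (abs_det_le_half_of_corner h1 h2 hC.1 hA.2.1 hB.2.1 hC.2.1 (by linarith)
    (by linarith) (by linarith) hp ?_)
  exact hr.imp (fun _ => by linarith) (Or.imp (fun _ => by linarith) (fun _ => by linarith))

lemma existsUnique_mem_corner {A B C S P R : Pt} (hABC : signedArea₂ A B C ≠ 0)
    (h : IsMinIsoscelesContainer A B C S P R) :
    ∃! X : Pt, X ∈ ({A, B, C} : Set Pt) ∧
      X ∈ segment ℝ (midpoint ℝ S R) S ∪ segment ℝ S (midpoint ℝ S P) := by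
  obtain ⟨⟨hD, -, hA, hB, hC⟩, -⟩ := isMinIsoscelesContainer_iff.1 h
  have hACB : signedArea₂ A C B ≠ 0 := by rwa [signedArea₂_swap', neg_ne_zero]
  have hBCA : signedArea₂ B C A ≠ 0 := by rwa [signedArea₂_rotate]
  have nAB := not_half_le_bary_of_half_le_bary hABC h
  have nAC := not_half_le_bary_of_half_le_bary hACB h.swap_BC
  have nBC := not_half_le_bary_of_half_le_bary hBCA h.swap_AB.swap_BC
  have bd {X : Pt} (hX : X ∈ tri S P R) (hin : ¬ StrictlyInside S P R X)
      (hs : 1 / 2 ≤ bary S P R X) :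
      X ∈ segment ℝ (midpoint ℝ S R) S ∪ segment ℝ S (midpoint ℝ S P) := by
    refine (mem_corner_iff hD hX).2 ⟨hs, ?_⟩
    have hX' := (mem_tri_iff_bary hD X).1 hX
    by_contra! hne
    exact hin ⟨by linarith, hX'.2.1.lt_of_ne hne.1.symm, hX'.2.2.lt_of_ne hne.2.symm⟩
  have iA := not_strictlyInside_of_isMin h.swap_AB.swap_BC
  have iB := not_strictlyInside_of_isMin h.swap_BC
  have iC := not_strictlyInside_of_isMin h
  have back {X : Pt} (hX : X ∈ tri S P R)
      (hc : X ∈ segment ℝ (midpoint ℝ S R) S ∪ segment ℝ S (midpoint ℝ S P)) :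
      1 / 2 ≤ bary S P R X := ((mem_corner_iff hD hX).1 hc).1
  rcases exists_half_le_bary hABC h with e | e | e
  · refine ⟨A, ⟨by simp, bd hA iA e⟩, ?_⟩
    rintro Y ⟨rfl | rfl | rfl, hY⟩
    · rfl
    · exact absurd (back hB hY) (nAB e)
    · exact absurd (back hC hY) (nAC e)
  · refine ⟨B, ⟨by simp, bd hB iB e⟩, ?_⟩
    rintro Y ⟨rfl | rfl | rfl, hY⟩
    · exact absurd e (nAB (back hA hY))
    · rfl
    · exact absurd (back hC hY) (nBC e)
  · refine ⟨C, ⟨by simp, bd hC iC e⟩, ?_⟩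
    rintro Y ⟨rfl | rfl | rfl, hY⟩
    · exact absurd e (nAC (back hA hY))
    · exact absurd e (nBC (back hB hY))
    · rfl

/-- let `S P R` be a minimum area isosceles container for the
triangle `A B C`, and let `m_S`, `m_P`, `m_R` be the midpoints of `PR`, `SR`,
`SP`. Then each of the closed boundary pieces `[m_P,S] ∪ [S,m_R]`,
`[m_R,P] ∪ [P,m_S]`, `[m_S,R] ∪ [R,m_P]` contains precisely one of the
vertices `A`, `B`, `C`. -/
theorem statement16 (A B C S P R : Pt)
    (hABC : AffineIndependent ℝ ![A, B, C])
    (hmin : IsMinIsoscelesContainer A B C S P R) :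
    (∃! X : Pt, X ∈ ({A, B, C} : Set Pt) ∧
      X ∈ segment ℝ (midpoint ℝ S R) (S) ∪ segment ℝ (S) (midpoint ℝ S P)) ∧
    (∃! X : Pt, X ∈ ({A, B, C} : Set Pt) ∧
      X ∈ segment ℝ (midpoint ℝ S P) (P) ∪ segment ℝ (P) (midpoint ℝ P R)) ∧
    (∃! X : Pt, X ∈ ({A, B, C} : Set Pt) ∧
      X ∈ segment ℝ (midpoint ℝ P R) (R) ∪ segment ℝ (R) (midpoint ℝ S R)) := by
  rw [affineIndependent_iff_signedArea₂_ne_zero] at hABC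
  refine ⟨existsUnique_mem_corner hABC hmin, ?_, ?_⟩
  · rw [midpoint_comm S P]
    exact existsUnique_mem_corner hABC hmin.swap_SP.swap_PR
  · rw [midpoint_comm P R, midpoint_comm S R]
    exact existsUnique_mem_corner hABC hmin.swap_PR.swap_SP
end
end

section
/- Let ABC be a triangle and let SPR be a minimum area isosceles container for ABC. Then ABC and SPR have a common vertex: at least one of A, B, C equals one of S, P, R. -/
open EuclideanGeometry MeasureTheory Real

noncomputable section

/-- The linear map with matrix `!![p, -q; q, p]`, that is, multiplication by `p + q i` under the
identification of the plane with `ℂ`. -/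
def rotScale (p q : ℝ) : Pt →ₗ[ℝ] Pt := Matrix.toEuclideanLin !![p, -q; q, p]

lemma rotScale_apply_zero (p q : ℝ) (x : Pt) : rotScale p q x 0 = p * x 0 - q * x 1 := by
  simp [rotScale, Matrix.toLpLin_apply, dotProduct, Fin.sum_univ_two]
  ring

lemma rotScale_apply_one (p q : ℝ) (x : Pt) : rotScale p q x 1 = q * x 0 + p * x 1 := by
  simp [rotScale, Matrix.toLpLin_apply, dotProduct, Fin.sum_univ_two]

lemma rotScale_apply (p q : ℝ) (x : Pt) : rotScale p q x = p • x + q • rotScale 0 1 x := by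
  ext i
  fin_cases i
  · simp [rotScale_apply_zero]
    ring
  · simp [rotScale_apply_one]
    ring

lemma det_rotScale (p q : ℝ) : LinearMap.det (rotScale p q) = p ^ 2 + q ^ 2 := by
  rw [rotScale, Matrix.toEuclideanLin, Matrix.toLpLin_eq_toLin, LinearMap.det_toLin, Matrix.det_fin_two_of]
  ring

lemma norm_rotScale (p q : ℝ) (x : Pt) : ‖rotScale p q x‖ = √(p ^ 2 + q ^ 2) * ‖x‖ := by
  rw [EuclideanSpace.norm_eq, EuclideanSpace.norm_eq, ← Real.sqrt_mul (by positivity)]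
  congr 1
  simp only [Fin.sum_univ_two, Real.norm_eq_abs, sq_abs, rotScale_apply_zero, rotScale_apply_one]
  ring

lemma image_tri (f : Pt →ᵃ[ℝ] Pt) (S P R : Pt) : f '' tri S P R = tri (f S) (f P) (f R) := by
  rw [tri, tri, AffineMap.image_convexHull, Set.image_insert_eq, Set.image_pair]

lemma range_vec_three {α : Type*} (x y z : α) : Set.range ![x, y, z] = {x, y, z} := by
  ext w
  simp only [Matrix.range_cons, Matrix.range_empty, Set.mem_union, Set.mem_singleton_iff,
    Set.mem_insert_iff, Set.union_empty]

lemma volume_tri_ne_zero {S P R : Pt} (h : AffineIndependent ℝ ![S, P, R]) :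
    volume (tri S P R) ≠ 0 := by
  have htop : affineSpan ℝ (Set.range ![S, P, R]) = ⊤ :=
    h.affineSpan_eq_top_iff_card_eq_finrank_add_one.2 (by simp)
  rw [range_vec_three] at htop
  have hint := interior_convexHull_nonempty_iff_affineSpan_eq_top.2 htop
  exact (Measure.measure_pos_of_nonempty_interior volume hint).ne'

lemma volume_tri_ne_top (S P R : Pt) : volume (tri S P R) ≠ ⊤ :=
  (Set.Finite.isCompact_convexHull (𝕜 := ℝ) (by simp : ({S, P, R} : Set Pt).Finite)).measure_ne_top

/-- If an expanding similarity maps `A B C` into the isosceles triangle `S P R`, then its inverse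
maps `S P R` to an isosceles container of `A B C` of smaller area. -/
lemma exists_smaller_container {A B C S P R : Pt} (hind : AffineIndependent ℝ ![S, P, R])
    (hiso : IsIsosceles S P R) {p q : ℝ} (hpq : 1 < p ^ 2 + q ^ 2) (v : Pt)
    (hA : rotScale p q A + v ∈ tri S P R) (hB : rotScale p q B + v ∈ tri S P R)
    (hC : rotScale p q C + v ∈ tri S P R) :
    ∃ S' P' R' : Pt, IsIsoscelesContainer A B C S' P' R' ∧
      triArea S' P' R' < triArea S P R := by
  have hdet : IsUnit (LinearMap.det (rotScale p q)) := by
    rw [det_rotScale, isUnit_iff_ne_zero]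
    positivity
  let e := LinearMap.equivOfIsUnitDet hdet
  have he (x : Pt) : e x = rotScale p q x := LinearMap.equivOfIsUnitDet_apply hdet x
  let f : Pt →ᵃ[ℝ] Pt := (rotScale p q).toAffineMap + AffineMap.const ℝ Pt v
  have hf (x : Pt) : f x = rotScale p q x + v := rfl
  have hinj : Function.Injective f := fun x y hxy => by
    have : rotScale p q x = rotScale p q y := by simpa [hf] using hxy
    exact e.injective (by rw [he, he, this])
  have hsurj (x : Pt) : ∃ y, f y = x := by
    obtain ⟨y, hy⟩ := e.surjective (x - v)
    have hy' : rotScale p q y = x - v := he y ▸ hy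
    exact ⟨y, by rw [hf, hy', sub_add_cancel]⟩
  obtain ⟨S, rfl⟩ := hsurj S
  obtain ⟨P, rfl⟩ := hsurj P
  obtain ⟨R, rfl⟩ := hsurj R
  have hr : 0 < √(p ^ 2 + q ^ 2) := by positivity
  have hdist (x y : Pt) : dist (f x) (f y) = √(p ^ 2 + q ^ 2) * dist x y := by
    rw [dist_eq_norm, dist_eq_norm, hf, hf, add_sub_add_right_eq_sub, ← map_sub, norm_rotScale]
  rw [← image_tri] at hA hB hC
  refine ⟨S, P, R, ⟨?_, ?_, ?_⟩, ?_⟩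
  · refine AffineIndependent.of_comp f ?_
    convert hind using 1
    ext i
    fin_cases i <;> rfl
  · simpa only [IsIsosceles, hdist, mul_right_inj' hr.ne'] using hiso
  · refine convexHull_min ?_ (convex_convexHull ℝ _)
    rintro x (rfl | rfl | rfl)
    · exact (hinj.mem_set_image).1 hA
    · exact (hinj.mem_set_image).1 hB
    · exact (hinj.mem_set_image).1 hC
  · have hvol : triArea (f S) (f P) (f R) = (p ^ 2 + q ^ 2) * triArea S P R := by
      have himage : f '' tri S P R = (fun x => x + v) '' (rotScale p q '' tri S P R) := by
        rw [Set.image_image]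
        rfl
      rw [triArea, ← image_tri, himage, Set.image_add_right, measure_preimage_add_right,
        Measure.addHaar_image_linearMap, det_rotScale, abs_of_pos (by positivity),
        ENNReal.toReal_mul, ENNReal.toReal_ofReal (by positivity), triArea]
    have hpos : 0 < triArea (f S) (f P) (f R) :=
      ENNReal.toReal_pos (volume_tri_ne_zero hind) (volume_tri_ne_top _ _ _)
    rw [hvol] at hpos ⊢
    have : 0 < triArea S P R := pos_of_mul_pos_right hpos (by positivity)
    exact lt_mul_of_one_lt_left this hpq

/-- A point of a triangle other than its vertices has at most one vanishing barycentric
coordinate. -/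
lemma exists_forall_ne_coord_pos (b : AffineBasis (Fin 3) ℝ Pt) {x : Pt}
    (hx : ∀ i, 0 ≤ b.coord i x) (hne : ∀ i, x ≠ b i) : ∃ j, ∀ k, k ≠ j → 0 < b.coord k x := by
  by_contra! h
  have hsum := b.sum_coord_apply_eq_one x
  have key (i : Fin 3) (hi : ∀ k, k ≠ i → b.coord k x ≤ 0) : False := by
    have hz (k) (hk : k ≠ i) : b.coord k x = 0 := le_antisymm (hi k hk) (hx k)
    rw [Finset.sum_eq_single i (fun k _ hk => hz k hk) (by simp)] at hsum
    refine hne i (b.ext_elem fun k => ?_)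
    by_cases hk : k = i
    · subst hk
      simp [hsum]
    · rw [hz k hk, b.coord_apply_ne hk]
  obtain ⟨k, -, hk⟩ := h 0
  obtain ⟨l, hlk, hl⟩ := h k
  obtain ⟨i, hik, hil⟩ : ∃ i : Fin 3, i ≠ k ∧ i ≠ l := by
    clear hk hl
    revert k l
    decide
  refine key i fun m hm => ?_
  have : m = k ∨ m = l := by
    clear hk hl
    revert k l i m
    decide
  rcases this with rfl | rfl <;> assumption

lemma eq_zero_of_coord_linear_eq_zero (b : AffineBasis (Fin 3) ℝ Pt) {v : Pt} {i j : Fin 3}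
    (hij : i ≠ j) (hi : (b.coord i).linear v = 0) (hj : (b.coord j).linear v = 0) : v = 0 := by
  have hcoord (k : Fin 3) : b.coord k (v +ᵥ b 0) = (b.coord k).linear v + b.coord k (b 0) :=
    (b.coord k).map_vadd _ _
  have hsum : ∑ k, (b.coord k).linear v = 0 := by
    have h := b.sum_coord_apply_eq_one (v +ᵥ b 0)
    simp only [hcoord, Finset.sum_add_distrib, b.sum_coord_apply_eq_one] at h
    linarith
  have hall (k : Fin 3) : (b.coord k).linear v = 0 := by
    by_cases hki : k = i
    · exact hki ▸ hi
    by_cases hkj : k = j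
    · exact hkj ▸ hj
    rw [Finset.sum_eq_single k _ (by simp)] at hsum
    · exact hsum
    · intro m _ hm
      have : m = i ∨ m = j := by
        clear hi hj hcoord hsum
        revert i j k m
        decide
      rcases this with rfl | rfl <;> assumption
  have h : v +ᵥ b 0 = b 0 := b.ext_elem fun k => by rw [hcoord, hall, zero_add]
  simpa using h

/-- Three points can be moved by a nonzero infinitesimal similarity that does not
contract and under which a prescribed barycentric coordinate of each point does not decrease. -/
lemma exists_infinitesimal_similarity (b : AffineBasis (Fin 3) ℝ Pt) (x : Fin 3 → Pt)
    (hx : ∀ n i, 0 ≤ b.coord i (x n)) (j : Fin 3 → Fin 3) :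
    ∃ (p q : ℝ) (v : Pt), 0 ≤ p ∧ (p ≠ 0 ∨ q ≠ 0) ∧
      ∀ n, 0 ≤ (b.coord (j n)).linear (rotScale p q (x n) + v) := by
  by_cases hj : ∃ m n, j m ≠ j n
  · obtain ⟨m, n, hmn⟩ := hj
    let g (k : Fin 3) : (ℝ × ℝ) × Pt →ₗ[ℝ] Pt :=
      ((LinearMap.fst ℝ ℝ ℝ ∘ₗ LinearMap.fst ℝ (ℝ × ℝ) Pt).smulRight (x k) +
        (LinearMap.snd ℝ ℝ ℝ ∘ₗ LinearMap.fst ℝ (ℝ × ℝ) Pt).smulRight (rotScale 0 1 (x k))) +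
        LinearMap.snd ℝ (ℝ × ℝ) Pt
    let Φ : (ℝ × ℝ) × Pt →ₗ[ℝ] (Fin 3 → ℝ) :=
      LinearMap.pi fun k => (b.coord (j k)).linear ∘ₗ g k
    have hker : LinearMap.ker Φ ≠ ⊥ := LinearMap.ker_ne_bot_of_finrank_lt (by simp)
    obtain ⟨⟨⟨p, q⟩, v⟩, hΦ, hne⟩ := Submodule.exists_mem_ne_zero_of_ne_bot hker
    have hzero (k : Fin 3) : (b.coord (j k)).linear (rotScale p q (x k) + v) = 0 := by
      rw [rotScale_apply]
      exact congrFun (LinearMap.mem_ker.1 hΦ) k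
    have hpq : p ≠ 0 ∨ q ≠ 0 := by
      by_contra! h
      obtain ⟨rfl, rfl⟩ := h
      have hv (k : Fin 3) : (b.coord (j k)).linear v = 0 := by
        simpa [rotScale_apply 0 0] using hzero k
      exact hne (by rw [eq_zero_of_coord_linear_eq_zero b hmn (hv m) (hv n)]; rfl)
    rcases le_total 0 p with hp | hp
    · exact ⟨p, q, v, hp, hpq, fun k => (hzero k).ge⟩
    · refine ⟨-p, -q, -v, by linarith, by simpa using hpq, fun k => ?_⟩
      have : rotScale (-p) (-q) (x k) + -v = -(rotScale p q (x k) + v) := by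
        rw [rotScale_apply (-p), rotScale_apply p]
        module
      rw [this, map_neg, hzero, neg_zero]
  · push Not at hj
    obtain ⟨i, hi⟩ : ∃ i, i ≠ j 0 := exists_ne _
    refine ⟨1, 0, -b i, zero_le_one, Or.inl one_ne_zero, fun n => ?_⟩
    have h := (b.coord (j n)).linearMap_vsub (x n) (b i)
    rw [vsub_eq_sub, vsub_eq_sub, b.coord_apply_ne (hj n 0 ▸ hi.symm), sub_zero] at h
    rw [rotScale_apply, one_smul, zero_smul, add_zero, ← sub_eq_add_neg, h]
    exact hx n _

/-- Three points of a triangle, none of them a vertex, can be mapped into the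
triangle by an expanding similarity. -/
lemma exists_expanding_similarity (b : AffineBasis (Fin 3) ℝ Pt) (x : Fin 3 → Pt)
    (hx : ∀ n i, 0 ≤ b.coord i (x n)) (hne : ∀ n i, x n ≠ b i) :
    ∃ (p q : ℝ) (v : Pt), 1 < p ^ 2 + q ^ 2 ∧
      ∀ n i, 0 ≤ b.coord i (rotScale p q (x n) + v) := by
  choose j hj using fun n => exists_forall_ne_coord_pos b (hx n) (hne n)
  obtain ⟨p, q, v, hp, hpq, hmove⟩ := exists_infinitesimal_similarity b x hx j
  have hcoord (ε : ℝ) (n i : Fin 3) :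
      b.coord i (rotScale (1 + ε * p) (ε * q) (x n) + ε • v) =
        b.coord i (x n) + ε * (b.coord i).linear (rotScale p q (x n) + v) := by
    have : rotScale (1 + ε * p) (ε * q) (x n) + ε • v =
        ε • (rotScale p q (x n) + v) +ᵥ x n := by
      rw [rotScale_apply (1 + ε * p), rotScale_apply p, vadd_eq_add]
      module
    rw [this, AffineMap.map_vadd, map_smul, vadd_eq_add, smul_eq_mul, add_comm]
  have hev : ∀ᶠ ε in nhdsWithin (0 : ℝ) (Set.Ioi 0), ∀ n i,
      0 ≤ b.coord i (x n) + ε * (b.coord i).linear (rotScale p q (x n) + v) := by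
    refine Filter.eventually_all.2 fun n => Filter.eventually_all.2 fun i => ?_
    by_cases hi : i = j n
    · filter_upwards [self_mem_nhdsWithin] with ε hε
      subst hi
      exact add_nonneg (hx n _) (mul_nonneg (le_of_lt hε) (hmove n))
    · have hcont : Continuous fun ε : ℝ =>
          b.coord i (x n) + ε * (b.coord i).linear (rotScale p q (x n) + v) := by fun_prop
      have hpos := (hcont.tendsto 0).eventually_const_lt (u := 0) (by
        rw [zero_mul, add_zero]
        exact hj n i hi)
      filter_upwards [nhdsWithin_le_nhds hpos] with ε hε using hε.le
  obtain ⟨ε, hε, hεpos⟩ := (hev.and self_mem_nhdsWithin).exists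
  have hεpos : 0 < ε := hεpos
  refine ⟨1 + ε * p, ε * q, ε • v, ?_, fun n i => (hcoord ε n i).symm ▸ hε n i⟩
  rcases hpq with h | h
  · have : 0 < p := lt_of_le_of_ne hp h.symm
    nlinarith [mul_pos hεpos this, sq_nonneg (ε * p), sq_nonneg (ε * q)]
  · have : 0 < (ε * q) ^ 2 := by positivity
    nlinarith [mul_nonneg hεpos.le hp, sq_nonneg (ε * p)]

/-- a triangle `A B C` and any of its minimum area isosceles
containers `S P R` have a common vertex. -/
theorem statement17 (A B C S P R : Pt)
    (hABC : AffineIndependent ℝ ![A, B, C])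
    (hmin : IsMinIsoscelesContainer A B C S P R) :
    A ∈ ({S, P, R} : Set Pt) ∨ B ∈ ({S, P, R} : Set Pt) ∨
      C ∈ ({S, P, R} : Set Pt) := by
  obtain ⟨⟨hind, hiso, hsub⟩, hle⟩ := hmin
  by_contra! hno
  obtain ⟨hA, hB, hC⟩ := hno
  let b : AffineBasis (Fin 3) ℝ Pt :=
    ⟨![S, P, R], hind, hind.affineSpan_eq_top_iff_card_eq_finrank_add_one.2 (by simp)⟩
  have hb : Set.range b = {S, P, R} := range_vec_three S P R
  have hmem (x : Pt) : x ∈ tri S P R ↔ ∀ i, 0 ≤ b.coord i x := by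
    rw [tri, ← hb, b.convexHull_eq_nonneg_coord, Set.mem_ofPred_eq]
  have hvert (n : Fin 3) : ![A, B, C] n ∈ tri S P R := by
    refine hsub (subset_convexHull ℝ _ ?_)
    fin_cases n <;> simp
  have hne (n i : Fin 3) : ![A, B, C] n ≠ b i := by
    have hi : b i ∈ ({S, P, R} : Set Pt) := hb ▸ Set.mem_range_self i
    intro h
    rw [← h] at hi
    fin_cases n
    exacts [hA hi, hB hi, hC hi]
  obtain ⟨p, q, v, hpq, h⟩ :=
    exists_expanding_similarity b ![A, B, C] (fun n => (hmem _).1 (hvert n)) hne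
  obtain ⟨S', P', R', hcont, hlt⟩ := exists_smaller_container hind hiso hpq v
    ((hmem _).2 (h 0)) ((hmem _).2 (h 1)) ((hmem _).2 (h 2))
  exact (hle S' P' R' hcont).not_gt hlt
end
end
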